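/- arXiv:1204.2445 — 4 statements merged into one kernel-verified Lean document; each statement's English description precedes it below -/
import Mathlib

section
/- A subset A of the real numbers is bounded if and only if every sequence of points in A has a quasi-Cauchy subsequence, i.e., a subsequence (y_k) with lim_{k→∞} (y_{k+1} − y_k) = 0. -/
open Filter Topology

/-- A real sequence `y` is quasi-Cauchy if `y (k + 1) - y k → 0`. -/
def QuasiCauchy (y : ℕ → ℝ) : Prop :=
  Tendsto (fun k => y (k + 1) - y k) atTop (𝓝 0)

/-! In `ℝ`, bounded means totally bounded, and total boundedness is a uniform notion. The closure
of a totally bounded set in the completion is compact, so a sequence in the set has a Cauchy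
subsequence. A set that is not totally bounded contains a sequence whose terms are pairwise
separated by one entourage `V`; no subsequence of it is quasi-Cauchy, since consecutive terms are
never `V`-close. -/

open Set UniformSpace Uniformity

section UniformSpace

variable {X : Type*} [UniformSpace X] {s : Set X} {u : ℕ → X}

/-- A sequence in a uniform space is quasi-Cauchy if consecutive terms become arbitrarily close.
On `ℝ` this is `QuasiCauchy`; stating it through the uniformity avoids subtraction. -/
def QuasiCauchySeq (u : ℕ → X) : Prop :=
  Tendsto (fun n => (u n, u (n + 1))) atTop (𝓤 X)

theorem quasiCauchySeq_of_cauchySeq (hu : CauchySeq u) : QuasiCauchySeq u :=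
  (tendsto_map.prodMk (tendsto_map.comp (tendsto_add_atTop_nat 1))).mono_right hu.2

theorem exists_subseq_cauchySeq_of_totallyBounded [IsCountablyGenerated (𝓤 X)]
    (hs : TotallyBounded s) (hu : ∀ n, u n ∈ s) :
    ∃ φ : ℕ → ℕ, StrictMono φ ∧ CauchySeq (u ∘ φ) := by
  -- A pseudometric on `X` makes the completion a metric space, in which compact sets are
  -- sequentially compact.
  let _ := UniformSpace.pseudoMetricSpace X
  have hcompact : IsCompact (closure ((↑) '' s : Set (Completion X))) :=
    (hs.image (Completion.uniformContinuous_coe X)).closure.isCompact_of_isClosed isClosed_closure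
  obtain ⟨a, -, φ, hφ, ha⟩ :=
    hcompact.tendsto_subseq fun n => subset_closure (mem_image_of_mem _ (hu n))
  exact ⟨φ, hφ, (Completion.isUniformInducing_coe X).cauchy_map_iff.1 ha.cauchySeq⟩

theorem exists_seq_pairwise_notMem_of_not_totallyBounded (hs : ¬ TotallyBounded s) :
    ∃ V ∈ 𝓤 X, ∃ u : ℕ → X, (∀ n, u n ∈ s) ∧ Pairwise fun m n => (u m, u n) ∉ V := by
  obtain ⟨V, hV, hsymm, hcover⟩ : ∃ V ∈ 𝓤 X, SetRel.IsSymm V ∧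
      ∀ t : Set X, t.Finite → ¬ s ⊆ ⋃ y ∈ t, ball y V := by
    contrapose! hs
    exact totallyBounded_of_forall_isSymm hs
  have hsymm_compl : Std.Symm fun x y => (x, y) ∉ V := ⟨fun x y hxy hyx => hxy (hsymm.symm _ _ hyx)⟩
  refine ⟨V, hV, exists_seq_of_forall_finset_exists' (· ∈ s) (fun x y => (x, y) ∉ V) fun t _ => ?_⟩
  simpa [not_subset, ball] using hcover t t.finite_toSet

theorem not_quasiCauchySeq_of_forall_notMem {V : Set (X × X)} (hV : V ∈ 𝓤 X)
    (hu : ∀ n, (u n, u (n + 1)) ∉ V) : ¬ QuasiCauchySeq u := fun hquasi =>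
  let ⟨n, hn⟩ := (hquasi.eventually_mem hV).exists
  hu n hn

theorem bounded_iff_quasiCauchy_compact_general [IsCountablyGenerated (𝓤 X)] :
    TotallyBounded s ↔
      ∀ x : ℕ → X, (∀ n, x n ∈ s) →
        ∃ k : ℕ → ℕ, StrictMono k ∧ QuasiCauchySeq (x ∘ k) := by
  refine ⟨fun hs x hx => ?_, fun h => ?_⟩
  · obtain ⟨k, hk, hcauchy⟩ := exists_subseq_cauchySeq_of_totallyBounded hs hx
    exact ⟨k, hk, quasiCauchySeq_of_cauchySeq hcauchy⟩
  · by_contra hs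
    obtain ⟨V, hV, x, hxs, hsep⟩ := exists_seq_pairwise_notMem_of_not_totallyBounded hs
    obtain ⟨k, hk, hquasi⟩ := h x hxs
    exact not_quasiCauchySeq_of_forall_notMem hV (fun n => hsep (hk n.lt_succ_self).ne) hquasi

end UniformSpace

theorem totallyBounded_iff_isBounded {X : Type*} [PseudoMetricSpace X] [ProperSpace X]
    {s : Set X} : TotallyBounded s ↔ Bornology.IsBounded s :=
  ⟨TotallyBounded.isBounded, fun hs => hs.isCompact_closure.totallyBounded.subset subset_closure⟩

theorem quasiCauchySeq_iff_quasiCauchy {y : ℕ → ℝ} : QuasiCauchySeq y ↔ QuasiCauchy y := by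
  simp only [QuasiCauchySeq, QuasiCauchy, uniformity_eq_comap_nhds_zero, tendsto_comap_iff,
    Function.comp_def]

/-- A subset `A` of `ℝ` is bounded iff every sequence of points in `A`
has a quasi-Cauchy subsequence. -/
theorem bounded_iff_quasiCauchy_compact (A : Set ℝ) :
    Bornology.IsBounded A ↔
      ∀ x : ℕ → ℝ, (∀ n, x n ∈ A) →
        ∃ k : ℕ → ℕ, StrictMono k ∧ QuasiCauchy (x ∘ k) := by
  simpa only [totallyBounded_iff_isBounded, quasiCauchySeq_iff_quasiCauchy] using
    bounded_iff_quasiCauchy_compact_general (s := A)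
end

section
/- Let p be a positive integer and E an interval of ℝ. If a function f : E → ℝ is p-quasi-Cauchy continuous on E, then f is uniformly continuous on E. -/
open Filter Topology

/-- A real sequence `x` is `p`-quasi-Cauchy if `x (n + p) - x n → 0`. -/
def PQuasiCauchy (p : ℕ) (x : ℕ → ℝ) : Prop :=
  Tendsto (fun n => x (n + p) - x n) atTop (𝓝 0)

/-- A function `f` is `p`-quasi-Cauchy continuous on `E` if it maps `p`-quasi-Cauchy
sequences of points in `E` to `p`-quasi-Cauchy sequences. -/
def PQuasiCauchyContinuousOn (p : ℕ) (f : ℝ → ℝ) (E : Set ℝ) : Prop :=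
  ∀ x : ℕ → ℝ, (∀ n, x n ∈ E) → PQuasiCauchy p x → PQuasiCauchy p (fun n => f (x n))

/-!
A failure of uniform continuity provides pairs `(a k, b k)` that become arbitrarily close while
`(f (a k), f (b k))` stay uniformly apart. In an interval, as in any set whose points are joined by
chains of arbitrarily small steps, `b k` is joined to `a (k + 1)` by finitely many points with
steps as small as desired. The concatenation `a 0, b 0, …, a 1, b 1, …` is then `1`-quasi-Cauchy,
although its image is not. The case of general `p` reduces to `p = 1` by repeating every term `p`
times.
-/

open Set Relation
open scoped Uniformity

/-- The `p`-quasi-Cauchy sequences of a uniform space: the pairs `(x n, x (n + p))` are eventually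
in every entourage. For real sequences this is `PQuasiCauchy`. -/
def IsQuasiCauchySeq {X : Type*} [UniformSpace X] (p : ℕ) (x : ℕ → X) : Prop :=
  Tendsto (fun n => (x n, x (n + p))) atTop (𝓤 X)

/-- Preservation of `p`-quasi-Cauchy sequences of points of `E` by a map of uniform spaces. For real
functions this is `PQuasiCauchyContinuousOn`. -/
def IsQuasiCauchyContinuousOn {X Y : Type*} [UniformSpace X] [UniformSpace Y] (p : ℕ) (f : X → Y)
    (E : Set X) : Prop :=
  ∀ x : ℕ → X, (∀ n, x n ∈ E) → IsQuasiCauchySeq p x → IsQuasiCauchySeq p (f ∘ x)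

/-- Well-chained subsets of a uniform space: for every entourage `V`, any two points of `E` are
joined by a finite chain of points of `E` whose consecutive members are `V`-close. -/
def IsWellChained {X : Type*} [UniformSpace X] (E : Set X) : Prop :=
  ∀ V ∈ 𝓤 X, ∀ x ∈ E, ∀ y ∈ E, ReflTransGen (fun u v => (u, v) ∈ V ∩ E ×ˢ E) x y

theorem isQuasiCauchySeq_iff_pQuasiCauchy {p : ℕ} {x : ℕ → ℝ} :
    IsQuasiCauchySeq p x ↔ PQuasiCauchy p x := by
  rw [IsQuasiCauchySeq, uniformity_eq_comap_nhds_zero, tendsto_comap_iff]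
  rfl

theorem isQuasiCauchyContinuousOn_iff_pQuasiCauchyContinuousOn {p : ℕ} {f : ℝ → ℝ} {E : Set ℝ} :
    IsQuasiCauchyContinuousOn p f E ↔ PQuasiCauchyContinuousOn p f E := by
  simp only [IsQuasiCauchyContinuousOn, PQuasiCauchyContinuousOn,
    isQuasiCauchySeq_iff_pQuasiCauchy, Function.comp_def]

section Walk

variable {α : Type*}

theorem exists_walk_of_reflTransGen {r : α → α → Prop} {a b c : α} (hab : r a b)
    (hbc : ReflTransGen r b c) :
    ∃ (n : ℕ) (w : ℕ → α), 0 < n ∧ w 0 = a ∧ w 1 = b ∧ w n = c ∧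
      ∀ i < n, r (w i) (w (i + 1)) := by
  induction hbc using ReflTransGen.head_induction_on generalizing a with
  | refl => exact ⟨1, fun i => i.casesOn a fun _ => c, one_pos, rfl, rfl, rfl, by simpa using hab⟩
  | head hbd _ ih =>
    obtain ⟨n, w, -, hw0, -, hwn, hw⟩ := ih hbd
    refine ⟨n + 1, fun i => i.casesOn a w, n.succ_pos, rfl, hw0, hwn, ?_⟩
    rintro (_ | i) hi
    · change r a (w 0)
      rwa [hw0]
    · exact hw i (Nat.lt_of_succ_lt_succ hi)

theorem exists_forall_eqOn_Icc_of_strictMono {β : Type*} [PartialOrder β] {t : ℕ → β}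
    (ht : StrictMono t) {v : ℕ → β → α} (hv : ∀ k, v k (t (k + 1)) = v (k + 1) (t (k + 1))) :
    ∃ x : β → α, ∀ k, EqOn x (v k) (Icc (t k) (t (k + 1))) := by
  have hblock : ∀ n, ∃ k, ∀ l, n ∈ Ico (t l) (t (l + 1)) → l = k := by
    intro n
    by_cases hn : ∃ k, n ∈ Ico (t k) (t (k + 1))
    · obtain ⟨k, hk⟩ := hn
      exact ⟨k, fun l hl => ht.monotone.pairwise_disjoint_on_Ico_succ.eq
        (not_disjoint_iff.2 ⟨n, hl, hk⟩)⟩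
    · exact ⟨0, fun l hl => (hn ⟨l, hl⟩).elim⟩
  choose K hK using hblock
  refine ⟨fun n => v (K n) n, fun k n hn => ?_⟩
  rcases hn.2.lt_or_eq with hlt | rfl
  · simp only [← hK n k ⟨hn.1, hlt⟩]
  · simp only [← hK _ (k + 1) ⟨le_rfl, ht (k + 1).lt_succ_self⟩, hv]

theorem exists_seq_of_forall_reflTransGen {r : ℕ → α → α → Prop} (hr : Antitone r) {a b : ℕ → α}
    (hab : ∀ k, r k (a k) (b k)) (hba : ∀ k, ReflTransGen (r k) (b k) (a (k + 1))) :
    ∃ (x : ℕ → α) (t : ℕ → ℕ), StrictMono t ∧ t 0 = 0 ∧ (∀ k, x (t k) = a k ∧ x (t k + 1) = b k) ∧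
      ∀ m n, t m ≤ n → r m (x n) (x (n + 1)) := by
  choose N w hN hw_zero hw_one hw_last hw using fun k =>
    exists_walk_of_reflTransGen (hab k) (hba k)
  let t : ℕ → ℕ := fun k => ∑ i ∈ Finset.range k, N i
  have ht_succ (k : ℕ) : t (k + 1) = t k + N k := Finset.sum_range_succ N k
  have ht : StrictMono t := strictMono_nat_of_lt_succ fun k => by have := hN k; grind
  obtain ⟨x, hx⟩ := exists_forall_eqOn_Icc_of_strictMono ht (v := fun k n => w k (n - t k))
    fun k => by simp [ht_succ, hw_last, hw_zero]
  have hxw (k i : ℕ) (hi : i ≤ N k) : x (t k + i) = w k i := by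
    simpa using hx k ⟨(t k).le_add_right i, by grind⟩
  refine ⟨x, t, ht, rfl, fun k => ⟨?_, ?_⟩, fun m n hmn => ?_⟩
  · rw [← hw_zero k, ← hxw k 0 (Nat.zero_le _), add_zero]
  · rw [← hw_one k, ← hxw k 1 (hN k)]
  · have hcover : n ∈ ⋃ k ∈ Ici m, Ico (t k) (t (k + 1)) :=
      (biUnion_Ici_Ico_map_succ (fun _ hmk => ht.monotone hmk)
        ((Ici_infinite m).image ht.injective.injOn).not_bddAbove).ge hmn
    obtain ⟨k, hmk, hkn, hnk⟩ := mem_iUnion₂.1 hcover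
    obtain ⟨i, rfl⟩ := Nat.exists_eq_add_of_le hkn
    have hi : i < N k := by grind
    rw [add_assoc, hxw k i hi.le, hxw k (i + 1) hi]
    exact hr hmk _ _ (hw k i hi)

end Walk

section UniformSpace

variable {X Y : Type*} [UniformSpace X] [UniformSpace Y] {p : ℕ} {f : X → Y} {E : Set X}

theorem isWellChained_of_isPreconnected (hE : IsPreconnected E) : IsWellChained E := by
  intro V hV x hx y hy
  refine hE.induction₂' _ (fun u hu => ?_) (fun _ _ _ _ _ _ => ReflTransGen.trans) hx hy
  filter_upwards [mem_nhdsWithin_of_mem_nhds (mem_nhds_left u hV),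
    mem_nhdsWithin_of_mem_nhds (mem_nhds_right u hV), self_mem_nhdsWithin] with v huv hvu hv
  exact ⟨.single ⟨huv, hu, hv⟩, .single ⟨hvu, hv, hu⟩⟩

theorem IsQuasiCauchyContinuousOn.one (hf : IsQuasiCauchyContinuousOn p f E) (hp : 0 < p) :
    IsQuasiCauchyContinuousOn 1 f E := by
  intro x hxE hx
  have hrepeat : IsQuasiCauchySeq p (fun n => x (n / p)) :=
    (hx.comp (Nat.tendsto_div_const_atTop hp.ne')).congr fun n => by
      simp only [Function.comp_apply, Nat.add_div_right n hp]
  refine ((hf _ (fun _ => hxE _) hrepeat).comp (tendsto_id.atTop_mul_const' hp)).congr fun n => ?_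
  simp only [Function.comp_apply, id_eq, Nat.add_div_right _ hp, Nat.mul_div_cancel _ hp]

theorem IsWellChained.exists_isQuasiCauchySeq_through_pairs (hE : IsWellChained E)
    {V : ℕ → Set (X × X)} (hV : (𝓤 X).HasAntitoneBasis V) {a b : ℕ → X}
    (hab : ∀ k, (a k, b k) ∈ V k ∩ E ×ˢ E) :
    ∃ (x : ℕ → X) (t : ℕ → ℕ), (∀ n, x n ∈ E) ∧ IsQuasiCauchySeq 1 x ∧ StrictMono t ∧
      ∀ k, x (t k) = a k ∧ x (t k + 1) = b k := by
  obtain ⟨x, t, ht, ht_zero, hxt, hstep⟩ :=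
    exists_seq_of_forall_reflTransGen (r := fun k u v => (u, v) ∈ V k ∩ E ×ˢ E)
      (fun _ _ hkl _ _ h => ⟨hV.antitone hkl h.1, h.2⟩) hab
      fun k => hE _ (hV.mem k) _ (hab k).2.2 _ (hab (k + 1)).2.1
  refine ⟨x, t, fun n => (hstep 0 n (by simp [ht_zero])).2.1, ?_, ht, hxt⟩
  refine hV.tendsto_right_iff.2 fun m _ => ?_
  filter_upwards [eventually_ge_atTop (t m)] with n hn using (hstep m n hn).1

theorem pQuasiCauchyContinuous_on_interval_uniformContinuous_general [(𝓤 X).IsCountablyGenerated]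
    (hp : 0 < p) (hE : IsWellChained E) (hf : IsQuasiCauchyContinuousOn p f E) :
    UniformContinuousOn f E := by
  obtain ⟨V, hV⟩ := (𝓤 X).exists_antitone_basis
  by_contra hnot
  obtain ⟨W, hW, hbad⟩ : ∃ W ∈ 𝓤 Y, ∀ k, ∃ q ∈ V k ∩ E ×ˢ E, (f q.1, f q.2) ∉ W := by
    rw [UniformContinuousOn, (hV.1.inf_principal _).tendsto_iff (𝓤 Y).basis_sets] at hnot
    push Not at hnot
    simpa using hnot
  choose q hq hqW using hbad
  obtain ⟨x, t, hxE, hx, ht, hxt⟩ := hE.exists_isQuasiCauchySeq_through_pairs hV hq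
  have hlim : Tendsto (fun k => (f (x (t k)), f (x (t k + 1)))) atTop (𝓤 Y) :=
    (hf.one hp x hxE hx).comp ht.tendsto_atTop
  obtain ⟨k, hk⟩ := (hlim.eventually_mem hW).exists
  rw [(hxt k).1, (hxt k).2] at hk
  exact hqW k hk

end UniformSpace

/-- If `f` is `p`-quasi-Cauchy continuous on an interval (nonempty
convex subset) `E` of `ℝ` for a positive integer `p`, then `f` is uniformly
continuous on `E`. -/
theorem pQuasiCauchyContinuous_on_interval_uniformContinuous
    (p : ℕ) (hp : 0 < p) (E : Set ℝ) (hne : E.Nonempty) (hconv : Convex ℝ E)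
    (f : ℝ → ℝ) (hf : PQuasiCauchyContinuousOn p f E) :
    UniformContinuousOn f E :=
  pQuasiCauchyContinuous_on_interval_uniformContinuous_general hp
    (isWellChained_of_isPreconnected hconv.isPreconnected)
    (isQuasiCauchyContinuousOn_iff_pQuasiCauchyContinuousOn.2 hf)
end

section
/- Let p be a positive integer and E a subset of ℝ. If (f_n) is a sequence of functions from E to ℝ, each p-quasi-Cauchy continuous on E, and (f_n) converges uniformly on E to a function f : E → ℝ, then f is p-quasi-Cauchy continuous on E. -/
open Filter Topology

open scoped Uniformity

theorem tendsto_uniformity_of_tendstoUniformlyOn {ι α β γ : Type*} [UniformSpace β]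
    {l : Filter ι} {m : Filter γ} {F : ι → α → β} {f : α → β} {s : Set α} {x y : γ → α}
    (hx : ∀ᶠ c in m, x c ∈ s) (hy : ∀ᶠ c in m, y c ∈ s)
    (hF : ∃ᶠ i in l, Tendsto (fun c => (F i (x c), F i (y c))) m (𝓤 β))
    (hconv : TendstoUniformlyOn F f l s) :
    Tendsto (fun c => (f (x c), f (y c))) m (𝓤 β) := by
  refine tendsto_def.mpr fun V hV => ?_
  obtain ⟨W, hW, hW_symm, hWV⟩ := comp_comp_symm_mem_uniformity_sets hV
  obtain ⟨i, hFi, hclose⟩ := (hF.and_eventually (hconv W hW)).exists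
  filter_upwards [hx, hy, hFi.eventually_mem hW] with c hxc hyc hxy
  -- The `ε/3` argument: `f (x c)`, `F i (x c)`, `F i (y c)`, `f (y c)` are successively `W`-close.
  exact hWV ⟨F i (y c), ⟨F i (x c), hclose _ hxc, hxy⟩, hW_symm.symm _ _ (hclose _ hyc)⟩

theorem pQuasiCauchy_iff_tendsto_uniformity {p : ℕ} {x : ℕ → ℝ} :
    PQuasiCauchy p x ↔ Tendsto (fun n => (x n, x (n + p))) atTop (𝓤 ℝ) := by
  rw [uniformity_eq_comap_nhds_zero, tendsto_comap_iff]
  rfl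

theorem uniform_limit_pQuasiCauchyContinuous_general {ι : Type*} {l : Filter ι} {p : ℕ}
    {E : Set ℝ} {F : ι → ℝ → ℝ} {f : ℝ → ℝ}
    (hF : ∃ᶠ i in l, PQuasiCauchyContinuousOn p (F i) E)
    (hconv : TendstoUniformlyOn F f l E) :
    PQuasiCauchyContinuousOn p f E := by
  intro x hxE hx
  have hFx : ∃ᶠ i in l, Tendsto (fun n => (F i (x n), F i (x (n + p)))) atTop (𝓤 ℝ) :=
    hF.mono fun i hFi => pQuasiCauchy_iff_tendsto_uniformity.mp (hFi x hxE hx)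
  exact pQuasiCauchy_iff_tendsto_uniformity.mpr <|
    tendsto_uniformity_of_tendstoUniformlyOn (.of_forall hxE)
      (.of_forall fun n => hxE (n + p)) hFx hconv

/-- If `(fₙ)` is a sequence of `p`-quasi-Cauchy continuous functions on a
subset `E` of `ℝ` converging uniformly on `E` to `f`, then `f` is `p`-quasi-Cauchy
continuous on `E`. -/
theorem uniform_limit_pQuasiCauchyContinuous
    (p : ℕ) (hp : 0 < p) (E : Set ℝ) (F : ℕ → ℝ → ℝ) (f : ℝ → ℝ)
    (hF : ∀ n, PQuasiCauchyContinuousOn p (F n) E)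
    (hconv : TendstoUniformlyOn F f atTop E) :
    PQuasiCauchyContinuousOn p f E :=
  uniform_limit_pQuasiCauchyContinuous_general (.of_forall hF) hconv
end

section
/- Let p be a positive integer. A function f : ℝ → ℝ is sequentially continuous (i.e., maps convergent sequences to convergent sequences) if and only if for every convergent real sequence (x_n), the image sequence (f(x_n)) is p-quasi-Cauchy. -/
open Filter Topology

/-!
Given `x n → a`, build a sequence which still converges to `a` but alternates between a block of
`p` copies of `a` and a block of `p` copies of a term of `x`. A shift by `p` then moves from `a` to
that term, so if `f` maps this sequence to a `p`-quasi-Cauchy one, `f a` and `f (x n)` become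
arbitrarily close.
-/

open scoped Uniformity

/-- The `p`-quasi-Cauchy property in a uniform space: terms `p` steps apart are eventually
arbitrarily close. It extends `PQuasiCauchy` beyond real sequences. -/
def UniformPQuasiCauchy {β : Type*} [UniformSpace β] (p : ℕ) (u : ℕ → β) : Prop :=
  Tendsto (fun n => (u n, u (n + p))) atTop (𝓤 β)

theorem uniformPQuasiCauchy_iff_pQuasiCauchy {p : ℕ} {u : ℕ → ℝ} :
    UniformPQuasiCauchy p u ↔ PQuasiCauchy p u := by
  rw [UniformPQuasiCauchy, uniformity_eq_comap_nhds_zero, tendsto_comap_iff]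
  rfl

theorem uniformPQuasiCauchy_of_tendsto {β : Type*} [UniformSpace β] (p : ℕ) {u : ℕ → β} {b : β}
    (hu : Tendsto u atTop (𝓝 b)) : UniformPQuasiCauchy p u :=
  (hu.prodMk_nhds (hu.comp (tendsto_add_atTop_nat p))).mono_right (nhds_le_uniformity b)

section BlockInterleave

variable {α : Type*} {p : ℕ}

/-- The sequence `x 0, …, x 0, y 0, …, y 0, x 1, …, x 1, y 1, …, y 1, …`, each term being repeated
`p` times. It turns a comparison of `x k` with `y k` into one of terms `p` steps apart. For `p = 0`,
where `n / 0 = 0`, it is constantly `x 0`. -/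
def blockInterleave (p : ℕ) (x y : ℕ → α) (n : ℕ) : α :=
  if Even (n / p) then x (n / p / 2) else y (n / p / 2)

theorem blockInterleave_two_mul_mul (hp : 0 < p) (x y : ℕ → α) (k : ℕ) :
    blockInterleave p x y (2 * k * p) = x k := by
  simp [blockInterleave, Nat.mul_div_cancel _ hp]

theorem blockInterleave_two_mul_mul_add (hp : 0 < p) (x y : ℕ → α) (k : ℕ) :
    blockInterleave p x y (2 * k * p + p) = y k := by
  have block_index : (2 * k * p + p) / p = 2 * k + 1 := by
    rw [Nat.add_div_right _ hp, Nat.mul_div_cancel _ hp]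
  have half_index : (2 * k + 1) / 2 = k := by lia
  simp [blockInterleave, block_index, half_index]

theorem tendsto_blockInterleave (hp : 0 < p) {x y : ℕ → α} {l : Filter α}
    (hx : Tendsto x atTop l) (hy : Tendsto y atTop l) :
    Tendsto (blockInterleave p x y) atTop l := by
  have tendsto_index : Tendsto (fun n => n / p / 2) atTop atTop :=
    (Nat.tendsto_div_const_atTop two_ne_zero).comp (Nat.tendsto_div_const_atTop hp.ne')
  exact (hx.comp tendsto_index).if' (hy.comp tendsto_index)

end BlockInterleave

section MapsConvergent

variable {α β : Type*} [UniformSpace β] {p : ℕ} {f : α → β}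

theorem tendsto_uniformity_of_forall_uniformPQuasiCauchy (hp : 0 < p) {l : Filter α}
    (hf : ∀ z : ℕ → α, Tendsto z atTop l → UniformPQuasiCauchy p (fun n => f (z n)))
    {x y : ℕ → α} (hx : Tendsto x atTop l) (hy : Tendsto y atTop l) :
    Tendsto (fun k => (f (x k), f (y k))) atTop (𝓤 β) := by
  have tendsto_block_start : Tendsto (fun k => 2 * k * p) atTop atTop :=
    (tendsto_id.const_mul_atTop' two_pos).atTop_mul_const' hp
  simpa only [Function.comp_def, blockInterleave_two_mul_mul hp,
    blockInterleave_two_mul_mul_add hp] using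
    (hf _ (tendsto_blockInterleave hp hx hy)).comp tendsto_block_start

theorem seqContinuous_of_forall_uniformPQuasiCauchy [TopologicalSpace α] (hp : 0 < p)
    (hf : ∀ x : ℕ → α, (∃ a, Tendsto x atTop (𝓝 a)) →
      UniformPQuasiCauchy p (fun n => f (x n))) :
    SeqContinuous f := fun _ a hx =>
  Uniform.tendsto_nhds_right.2 <|
    tendsto_uniformity_of_forall_uniformPQuasiCauchy hp (fun z hz => hf z ⟨a, hz⟩)
      tendsto_const_nhds hx

end MapsConvergent

theorem sequentiallyContinuous_iff_convergent_to_pQuasiCauchy_general {α β : Type*}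
    [TopologicalSpace α] [UniformSpace β] {p : ℕ} (hp : 0 < p) (f : α → β) :
    (∀ x : ℕ → α, (∃ a, Tendsto x atTop (𝓝 a)) →
      ∃ b, Tendsto (fun n => f (x n)) atTop (𝓝 b)) ↔
    (∀ x : ℕ → α, (∃ a, Tendsto x atTop (𝓝 a)) →
      UniformPQuasiCauchy p (fun n => f (x n))) := by
  constructor
  · intro hf x hx
    obtain ⟨b, hb⟩ := hf x hx
    exact uniformPQuasiCauchy_of_tendsto p hb
  · rintro hf x ⟨a, ha⟩
    exact ⟨f a, seqContinuous_of_forall_uniformPQuasiCauchy hp hf ha⟩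

/-- For a positive integer `p`, a function `f : ℝ → ℝ` maps convergent
sequences to convergent sequences iff it maps every convergent sequence to a
`p`-quasi-Cauchy sequence. -/
theorem sequentiallyContinuous_iff_convergent_to_pQuasiCauchy
    (p : ℕ) (hp : 0 < p) (f : ℝ → ℝ) :
    (∀ x : ℕ → ℝ, (∃ a : ℝ, Tendsto x atTop (𝓝 a)) →
      ∃ b : ℝ, Tendsto (fun n => f (x n)) atTop (𝓝 b)) ↔
    (∀ x : ℕ → ℝ, (∃ a : ℝ, Tendsto x atTop (𝓝 a)) →
      PQuasiCauchy p (fun n => f (x n))) := by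
  simpa only [uniformPQuasiCauchy_iff_pQuasiCauchy] using
    sequentiallyContinuous_iff_convergent_to_pQuasiCauchy_general hp f
end
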